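/- Let Φ be a rich sequence, and let H ⊆ G_Φ(T) be a clopen subset satisfying H = H·H⁻¹ (products of all composable pairs) and B_Φ(T) ⊆ H. Then H contains [Eⁿ]_G for some n ∈ ℕ. -/

import Mathlib

open FirstOrder FirstOrder.Language

variable {L : FirstOrder.Language}

/-- A sequence `Φ = (φ_n(x_{<n}, y))_n` of formulas (with `y` a single variable) is
rich if every formula `φ(x_{<k}, y)` appears, up to dummy variables, as `φ_n` for some
`n ≥ k`. -/
def IsRich (Φ : ∀ n : ℕ, L.Formula (Fin n ⊕ Unit)) : Prop :=
  ∀ (k : ℕ) (ψ : L.Formula (Fin k ⊕ Unit)),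
    ∃ (n : ℕ) (h : k ≤ n), Φ n = ψ.relabel (Sum.map (Fin.castLE h) id)

/-- `a_{<n}` realizes `D_{Φ,n}`, i.e.
`⋀_{k<n} ∀y [φ_k(a_{<k}, y) → φ_k(a_{<k}, a_k)]` holds in `M`. -/
def RealizesDn (Φ : ∀ n : ℕ, L.Formula (Fin n ⊕ Unit)) {M : Type*} [L.Structure M]
    (n : ℕ) (a : Fin n → M) : Prop :=
  ∀ (k : Fin n) (y : M),
    (Φ k).Realize (Sum.elim (fun i : Fin k => a (Fin.castLE k.2.le i)) (fun _ => y)) →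
    (Φ k).Realize (Sum.elim (fun i : Fin k => a (Fin.castLE k.2.le i)) (fun _ => a k))

/-- The sequence `a : ℕ → M` realizes the partial type `D_Φ = ⋀_n D_{Φ,n}(x_{<n})`. -/
def RealizesD (Φ : ∀ n : ℕ, L.Formula (Fin n ⊕ Unit)) {M : Type*} [L.Structure M]
    (a : ℕ → M) : Prop :=
  ∀ (k : ℕ) (y : M),
    (Φ k).Realize (Sum.elim (fun i : Fin k => a i) (fun _ => y)) →
    (Φ k).Realize (Sum.elim (fun i : Fin k => a i) (fun _ => a k))

/-- The (Boolean-valued) complete type of a tuple `a : α → M`: the set of formulas in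
variables `α` satisfied by `a`, viewed as a point of the Stone-type space
`L.Formula α → Bool` (with the product topology, `Bool` discrete). -/
noncomputable def tpFun {M : Type*} [L.Structure M] {α : Type*} (a : α → M) :
    L.Formula α → Bool :=
  fun φ => @decide (φ.Realize a) (Classical.propDecidable _)


/-- `S_{kD_Φ}(T)`: the space of types of `k`-tuples of realizations of `D_Φ`. -/
def SkD (T : L.Theory) (Φ : ∀ n : ℕ, L.Formula (Fin n ⊕ Unit)) (k : ℕ) :
    Set (L.Formula (Fin k × ℕ) → Bool) :=
  {p | ∃ (M : Type) (_ : L.Structure M) (_ : T.Model M) (_ : Countable M)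
    (a : Fin k → ℕ → M), (∀ i, RealizesD Φ (a i)) ∧ p = tpFun (fun q => a q.1 q.2)}

/-- `S_{kD_{Φ,n}}(T)`: the space of types of `k`-tuples of realizations of `D_{Φ,n}`. -/
def SkDn (T : L.Theory) (Φ : ∀ n : ℕ, L.Formula (Fin n ⊕ Unit)) (k n : ℕ) :
    Set (L.Formula (Fin k × Fin n) → Bool) :=
  {p | ∃ (M : Type) (_ : L.Structure M) (_ : T.Model M) (_ : Countable M)
    (a : Fin k → Fin n → M), (∀ i, RealizesDn Φ n (a i)) ∧ p = tpFun (fun q => a q.1 q.2)}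

/-- `G_Φ^{[k]}(T)`: the set of types `tp(a⁰, …, a^{k-1})` where all `a^i` are
enumerations of one common countable model of `T` and each realizes `D_Φ`. -/
def GPhiK (T : L.Theory) (Φ : ∀ n : ℕ, L.Formula (Fin n ⊕ Unit)) (k : ℕ) :
    Set (L.Formula (Fin k × ℕ) → Bool) :=
  {p | ∃ (M : Type) (_ : L.Structure M) (_ : T.Model M) (_ : Countable M)
    (a : Fin k → ℕ → M), (∀ i, Function.Surjective (a i)) ∧ (∀ i, RealizesD Φ (a i)) ∧
    p = tpFun (fun q => a q.1 q.2)}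

/-- The restriction map `π_{k,n} : tp(a⁰, …, a^{k-1}) ↦ tp(a⁰_{<n}, …, a^{k-1}_{<n})`. -/
def resMap (k n : ℕ) :
    (L.Formula (Fin k × ℕ) → Bool) → (L.Formula (Fin k × Fin n) → Bool) :=
  fun p φ => p (φ.relabel fun q => (q.1, (q.2 : ℕ)))

/-- `B_Φ(T) = S_{D_Φ}(T)`: the set of complete types extending `D_Φ`. -/
def BPhi (T : L.Theory) (Φ : ∀ n : ℕ, L.Formula (Fin n ⊕ Unit)) :
    Set (L.Formula ℕ → Bool) :=
  {p | ∃ (M : Type) (_ : L.Structure M) (_ : T.Model M) (_ : Countable M) (a : ℕ → M),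
    RealizesD Φ a ∧ p = tpFun a}

/-- `G_Φ(T)`: the set of types `tp(a,b)` where `a` and `b` are enumerations of one
common countable model of `T` and both realize `D_Φ`. -/
def GPhi (T : L.Theory) (Φ : ∀ n : ℕ, L.Formula (Fin n ⊕ Unit)) :
    Set (L.Formula (ℕ ⊕ ℕ) → Bool) :=
  {p | ∃ (M : Type) (_ : L.Structure M) (_ : T.Model M) (_ : Countable M) (a b : ℕ → M),
    Function.Surjective a ∧ Function.Surjective b ∧
    RealizesD Φ a ∧ RealizesD Φ b ∧ p = tpFun (Sum.elim a b)}

/-- The source map `tp(a,b) ↦ tp(b)`. -/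
def srcMap : (L.Formula (ℕ ⊕ ℕ) → Bool) → (L.Formula ℕ → Bool) :=
  fun p φ => p (φ.relabel Sum.inr)

/-- The target map `tp(a,b) ↦ tp(a)`. -/
def tgtMap : (L.Formula (ℕ ⊕ ℕ) → Bool) → (L.Formula ℕ → Bool) :=
  fun p φ => p (φ.relabel Sum.inl)


/-- The formula `x_i = y_i` in the variables `ℕ ⊕ ℕ`. -/
def eqFml (i : ℕ) : L.Formula (ℕ ⊕ ℕ) :=
  Term.equal (Term.var (Sum.inl i)) (Term.var (Sum.inr i))

/-- `[Eⁿ]_G`: the set of types in `G_Φ(T)` containing the formula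
`Eⁿ(x,y) : x_{<n} = y_{<n}`. -/
def EnSet (T : L.Theory) (Φ : ∀ n : ℕ, L.Formula (Fin n ⊕ Unit)) (n : ℕ) :
    Set (L.Formula (ℕ ⊕ ℕ) → Bool) :=
  {p ∈ GPhi T Φ | ∀ i < n, p (eqFml i) = true}


/-- The set of products `A · A'` of all composable pairs from `A` and `A'`:
`tp(a,b) · tp(b,c) = tp(a,c)` for enumerations `a, b, c` of a common countable model,
each realizing `D_Φ`. -/
def prodSet (T : L.Theory) (Φ : ∀ n : ℕ, L.Formula (Fin n ⊕ Unit))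
    (A A' : Set (L.Formula (ℕ ⊕ ℕ) → Bool)) : Set (L.Formula (ℕ ⊕ ℕ) → Bool) :=
  {r | ∃ (M : Type) (_ : L.Structure M) (_ : T.Model M) (_ : Countable M)
    (a b c : ℕ → M),
    Function.Surjective a ∧ Function.Surjective b ∧ Function.Surjective c ∧
    RealizesD Φ a ∧ RealizesD Φ b ∧ RealizesD Φ c ∧
    tpFun (Sum.elim a b) ∈ A ∧ tpFun (Sum.elim b c) ∈ A' ∧ r = tpFun (Sum.elim a c)}

/-- The set of inverses `A⁻¹ = {g⁻¹ : g ∈ A}`, where `tp(a,b)⁻¹ = tp(b,a)`. -/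
def invSet (T : L.Theory) (Φ : ∀ n : ℕ, L.Formula (Fin n ⊕ Unit))
    (A : Set (L.Formula (ℕ ⊕ ℕ) → Bool)) : Set (L.Formula (ℕ ⊕ ℕ) → Bool) :=
  {r | ∃ (M : Type) (_ : L.Structure M) (_ : T.Model M) (_ : Countable M)
    (a b : ℕ → M),
    Function.Surjective a ∧ Function.Surjective b ∧
    RealizesD Φ a ∧ RealizesD Φ b ∧
    tpFun (Sum.elim a b) ∈ A ∧ r = tpFun (Sum.elim b a)}

/-- `B_Φ(T)`, identified inside `S_{2×ℕ}(T)` with the set of types `tp(a,a)`. -/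
def basePairs (T : L.Theory) (Φ : ∀ n : ℕ, L.Formula (Fin n ⊕ Unit)) :
    Set (L.Formula (ℕ ⊕ ℕ) → Bool) :=
  {r | ∃ (M : Type) (_ : L.Structure M) (_ : T.Model M) (_ : Countable M) (a : ℕ → M),
    Function.Surjective a ∧ RealizesD Φ a ∧ r = tpFun (Sum.elim a a)}

/-!
Realizations of a rich `D_Φ` perform the Tarski–Vaught test: whatever formula has a solution over
the sequence has one in the sequence. So the entries of a realization form an elementary
substructure, and *every* type `tp(a,a)` with `a` realizing `D_Φ`, in a model of any size, lies in
`B_Φ(T)`. If an open `U` contained `B_Φ(T)` but no `[Eⁿ]_G`, pick `pₙ ∈ [Eⁿ]_G \ U` and realize a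
limit of the `pₙ` along a nonprincipal ultrafilter in an ultraproduct. Both `D_Φ` and all the
equations `x_i = y_i` pass to the limit, so the limit is in `B_Φ(T) ⊆ U`, a contradiction.
-/

section Types

open Filter Topology

variable {α : Type*}

theorem tpFun_eq_true_iff {M : Type*} [L.Structure M] (a : α → M) (φ : L.Formula α) :
    tpFun a φ = true ↔ φ.Realize a := by
  simp [tpFun]

theorem tpFun_relabel_inl_eq_true_iff {β M : Type*} [L.Structure M] {a : α → M} {b : β → M}
    {φ : L.Formula α} : tpFun (Sum.elim a b) (φ.relabel Sum.inl) = true ↔ φ.Realize a := by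
  rw [tpFun_eq_true_iff, Formula.realize_relabel, Sum.elim_comp_inl]

theorem tpFun_comp_elementaryEmbedding {M N : Type*} [L.Structure M] [L.Structure N]
    (f : M ↪ₑ[L] N) (a : α → M) : (tpFun (f ∘ a) : L.Formula α → Bool) = tpFun a := by
  funext φ
  rw [Bool.eq_iff_iff, tpFun_eq_true_iff, tpFun_eq_true_iff, f.map_formula]

theorem tendsto_tpFun_ultraproduct {ι : Type*} (u : Ultrafilter ι) {M : ι → Type*}
    [∀ i, L.Structure (M i)] [∀ i, Nonempty (M i)] (a : α → ∀ i, M i) :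
    Tendsto (fun i => (tpFun fun x => a x i : L.Formula α → Bool)) u
      (𝓝 (tpFun fun x => (a x : (u : Filter ι).Product M))) := by
  refine tendsto_pi_nhds.2 fun φ => ?_
  rw [nhds_discrete, tendsto_pure]
  have los := Ultraproduct.realize_formula_cast (u := u) φ a
  by_cases h : φ.Realize fun x => (a x : (u : Filter ι).Product M)
  · filter_upwards [los.1 h] with i hi
    rw [(tpFun_eq_true_iff _ φ).2 hi, (tpFun_eq_true_iff _ φ).2 h]
  · filter_upwards [Ultrafilter.eventually_not.2 (mt los.2 h)] with i hi
    rw [Bool.eq_iff_iff, tpFun_eq_true_iff, tpFun_eq_true_iff]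
    exact iff_of_false hi h

theorem model_ultraproduct (T : L.Theory) {ι : Type*} (u : Ultrafilter ι) (M : ι → Type*)
    [∀ i, L.Structure (M i)] [∀ i, T.Model (M i)] [∀ i, Nonempty (M i)] :
    T.Model ((u : Filter ι).Product M) :=
  ⟨fun φ hφ => (Ultraproduct.sentence_realize φ).2 <|
    .of_forall fun _ => Theory.realize_sentence_of_mem T hφ⟩

/-- `S_α(T)`, as the set of types of `α`-tuples in nonempty models of `T`. The models lie in
`Type`, as in the definition of `GPhi`, but need not be countable, which makes room for
ultraproducts. -/
def realizedTypes (T : L.Theory) (α : Type*) : Set (L.Formula α → Bool) :=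
  {p | ∃ (M : Type) (_ : L.Structure M) (_ : T.Model M) (_ : Nonempty M) (a : α → M),
    p = tpFun a}

theorem exists_tendsto_mem_realizedTypes {T : L.Theory} {ι : Type} (u : Ultrafilter ι)
    {p : ι → L.Formula α → Bool} (hp : ∀ i, p i ∈ realizedTypes T α) :
    ∃ q ∈ realizedTypes T α, Tendsto p u (𝓝 q) := by
  choose M _ _ _ a hpa using hp
  obtain rfl : p = fun i => tpFun (a i) := funext hpa
  exact ⟨_, ⟨(u : Filter ι).Product M, inferInstance, model_ultraproduct T u M, inferInstance, _,
    rfl⟩, tendsto_tpFun_ultraproduct u fun x i => a i x⟩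

theorem eq_true_of_tendsto_of_eventually {ι : Type*} {l : Filter ι} [l.NeBot] {β : Type*}
    {p : ι → β → Bool} {q : β → Bool} (hpq : Tendsto p l (𝓝 q)) {b : β}
    (hb : ∀ᶠ i in l, p i b = true) : q b = true :=
  (isClosed_eq (continuous_apply b) continuous_const).mem_of_tendsto hpq hb

end Types

section RealizesD

variable {Φ : ∀ n : ℕ, L.Formula (Fin n ⊕ Unit)} {M : Type*} [L.Structure M]

/-- The `k`-th conjunct `∀y [φ_k(x_{<k}, y) → φ_k(x_{<k}, x_k)]` of `D_Φ` as a single formula,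
written with the quantifier moved into the premise: `(∃y φ_k(x_{<k}, y)) → φ_k(x_{<k}, x_k)`. -/
noncomputable def witnessFml (Φ : ∀ n : ℕ, L.Formula (Fin n ⊕ Unit)) (k : ℕ) : L.Formula ℕ :=
  (((Φ k).iExs Unit).relabel Fin.val).imp ((Φ k).relabel (Sum.elim Fin.val fun _ => k))

theorem realizesD_iff_forall_realize_witnessFml {a : ℕ → M} :
    RealizesD Φ a ↔ ∀ k, (witnessFml Φ k).Realize a := by
  have comp_index (k : ℕ) : a ∘ Sum.elim (Fin.val : Fin k → ℕ) (fun _ : Unit => k) =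
      Sum.elim (fun i : Fin k => a i) fun _ => a k := Sum.comp_elim ..
  simp only [RealizesD, witnessFml, Formula.realize_imp, Formula.realize_relabel,
    Formula.realize_iExs, comp_index, forall_exists_index]
  exact forall_congr' fun k => ⟨fun h y => h (y ()), fun h y => h fun _ => y⟩

theorem realizesD_comp_elementaryEmbedding_iff {N : Type*} [L.Structure N] (f : M ↪ₑ[L] N)
    {a : ℕ → M} : RealizesD Φ (f ∘ a) ↔ RealizesD Φ a := by
  simp only [realizesD_iff_forall_realize_witnessFml, f.map_formula]

theorem exists_fin_formula_realize_iff {β : Type*} (ψ : L.Formula (ℕ ⊕ β)) :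
    ∃ (n : ℕ) (χ : L.Formula (Fin n ⊕ β)), ∀ (c : ℕ → M) (y : β → M),
      χ.Realize (Sum.elim (fun i : Fin n => c i) y) ↔ ψ.Realize (Sum.elim c y) := by
  classical
  let N := ψ.freeVarFinset.toLeft.sup id
  refine ⟨N + 1, ψ.restrictFreeVar fun x => Sum.map (Fin.ofNat (N + 1)) id x.1, fun c y => ?_⟩
  refine BoundedFormula.realize_restrictFreeVar _ ?_
  rintro ⟨i | j, hx⟩
  · have hi : i < N + 1 :=
      Nat.lt_succ_of_le (Finset.le_sup (f := id) (Finset.mem_toLeft.2 hx))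
    simp [Nat.mod_eq_of_lt hi]
  · rfl

theorem IsRich.exists_realize_iff (hΦ : IsRich Φ) (ψ : L.Formula (ℕ ⊕ Unit)) :
    ∃ k, ∀ (c : ℕ → M) (y : Unit → M),
      (Φ k).Realize (Sum.elim (fun i : Fin k => c i) y) ↔ ψ.Realize (Sum.elim c y) := by
  obtain ⟨n, χ, hχ⟩ := exists_fin_formula_realize_iff (M := M) ψ
  obtain ⟨k, hnk, hΦk⟩ := hΦ n χ
  refine ⟨k, fun c y => ?_⟩
  rw [hΦk, Formula.realize_relabel, Sum.elim_comp_map, ← hχ]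
  rfl

theorem RealizesD.meetsDefinable_range (hΦ : IsRich Φ) {c : ℕ → M} (hc : RealizesD Φ c) :
    L.MeetsDefinable (Set.range c) := by
  rintro D ⟨y, hy⟩ hD
  obtain ⟨φ, hφ⟩ := Set.definable_iff_exists_formula_sum.1 hD
  obtain ⟨k, hk⟩ := hΦ.exists_realize_iff (M := M)
    (φ.relabel (Sum.map (Set.rangeSplitting c) fun _ => ()))
  have mem_iff (z : M) :
      (Φ k).Realize (Sum.elim (fun i : Fin k => c i) fun _ => z) ↔ z ∈ D := by
    have hzD : z ∈ D ↔ φ.Realize (Sum.elim (↑) fun _ => z) := Set.ext_iff.1 hφ fun _ => z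
    rw [hk, hzD, Formula.realize_relabel, Sum.elim_comp_map, Set.comp_rangeSplitting]
    rfl
  exact ⟨c k, (mem_iff _).1 (hc k y ((mem_iff y).2 hy)), k, rfl⟩

end RealizesD

section Diagonal

variable {T : L.Theory} {Φ : ∀ n : ℕ, L.Formula (Fin n ⊕ Unit)}

theorem tpFun_elim_self_mem_basePairs (hΦ : IsRich Φ) {M : Type} [L.Structure M] [T.Model M]
    {c : ℕ → M} (hc : RealizesD Φ c) : tpFun (Sum.elim c c) ∈ basePairs T Φ := by
  have hrange := hc.meetsDefinable_range hΦ
  let S := hrange.toElementarySubstructure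
  let d : ℕ → S := fun i => ⟨c i, Substructure.subset_closure ⟨i, rfl⟩⟩
  have hd : Function.Surjective d := by
    rintro ⟨x, hx⟩
    obtain ⟨i, rfl⟩ : x ∈ Set.range c := hrange.closure_eq_self ▸ hx
    exact ⟨i, rfl⟩
  refine ⟨S, inferInstance, inferInstance, hd.countable, d, hd,
    (realizesD_comp_elementaryEmbedding_iff S.subtype).1 hc, ?_⟩
  rw [← tpFun_comp_elementaryEmbedding S.subtype, Sum.comp_elim]
  rfl

theorem tpFun_eqFml_eq_true_iff {M : Type*} [L.Structure M] {a b : ℕ → M} {i : ℕ} :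
    tpFun (Sum.elim a b) (eqFml i : L.Formula (ℕ ⊕ ℕ)) = true ↔ a i = b i := by
  simp [tpFun_eq_true_iff, eqFml, Formula.realize_equal]

theorem mem_basePairs_of_mem_realizedTypes (hΦ : IsRich Φ) {q : L.Formula (ℕ ⊕ ℕ) → Bool}
    (hq : q ∈ realizedTypes T (ℕ ⊕ ℕ)) (hD : ∀ k, q ((witnessFml Φ k).relabel Sum.inl) = true)
    (hE : ∀ i, q (eqFml i) = true) : q ∈ basePairs T Φ := by
  obtain ⟨M, _, _, _, v, rfl⟩ := hq
  obtain ⟨a, b, rfl⟩ : ∃ a b, v = Sum.elim a b := ⟨_, _, (Sum.elim_comp_inl_inr v).symm⟩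
  obtain rfl : a = b := funext fun i => tpFun_eqFml_eq_true_iff.1 (hE i)
  exact tpFun_elim_self_mem_basePairs hΦ <| realizesD_iff_forall_realize_witnessFml.2
    fun k => tpFun_relabel_inl_eq_true_iff.1 (hD k)

theorem GPhi_subset_realizedTypes : GPhi T Φ ⊆ realizedTypes T (ℕ ⊕ ℕ) := by
  rintro _ ⟨M, hM, hMT, _, a, b, _, _, _, _, rfl⟩
  exact ⟨M, hM, hMT, ⟨a 0⟩, _, rfl⟩

theorem witnessFml_eq_true_of_mem_GPhi {p : L.Formula (ℕ ⊕ ℕ) → Bool} (hp : p ∈ GPhi T Φ)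
    (k : ℕ) : p ((witnessFml Φ k).relabel Sum.inl) = true := by
  obtain ⟨M, _, _, _, a, b, _, _, ha, _, rfl⟩ := hp
  exact tpFun_relabel_inl_eq_true_iff.2 (realizesD_iff_forall_realize_witnessFml.1 ha k)

end Diagonal

open Filter in
theorem clopen_subgroupoid_contains_En_general {T : L.Theory}
    {Φ : ∀ n : ℕ, L.Formula (Fin n ⊕ Unit)} (hΦ : IsRich Φ)
    {U : Set (L.Formula (ℕ ⊕ ℕ) → Bool)} (hU : IsOpen U) (hbase : basePairs T Φ ⊆ U) :
    ∃ n : ℕ, EnSet T Φ n ⊆ U := by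
  by_contra! hcon
  choose p hpE hpU using fun n => Set.not_subset.1 (hcon n)
  obtain ⟨q, hq, hpq⟩ := exists_tendsto_mem_realizedTypes (hyperfilter ℕ)
    fun n => GPhi_subset_realizedTypes (hpE n).1
  have hqD (k : ℕ) : q ((witnessFml Φ k).relabel Sum.inl) = true :=
    eq_true_of_tendsto_of_eventually hpq <| .of_forall fun n =>
      witnessFml_eq_true_of_mem_GPhi (hpE n).1 k
  have hqE (i : ℕ) : q (eqFml i) = true :=
    eq_true_of_tendsto_of_eventually hpq <|
      ((eventually_gt_atTop i).filter_mono Nat.hyperfilter_le_atTop).mono fun n => (hpE n).2 i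
  have hqU : q ∈ U := hbase (mem_basePairs_of_mem_realizedTypes hΦ hq hqD hqE)
  obtain ⟨n, hn⟩ := (hpq.eventually_mem (hU.mem_nhds hqU)).exists
  exact hpU n hn

/-- STATEMENT 18: if `H ⊆ G_Φ(T)` is clopen (in `G_Φ(T)`), satisfies `H = H · H⁻¹`, and
contains `B_Φ(T)`, then `H` contains `[Eⁿ]_G` for some `n`. -/
theorem clopen_subgroupoid_contains_En {L : FirstOrder.Language}
    [Countable L.Symbols] (T : L.Theory) (hT : T.IsComplete)
    (Φ : ∀ n : ℕ, L.Formula (Fin n ⊕ Unit)) (hΦ : IsRich Φ)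
    (H : Set (L.Formula (ℕ ⊕ ℕ) → Bool)) (hsub : H ⊆ GPhi T Φ)
    (hopen : ∃ U, IsOpen U ∧ H = U ∩ GPhi T Φ)
    (hclosed : ∃ C, IsClosed C ∧ H = C ∩ GPhi T Φ)
    (hmul : prodSet T Φ H (invSet T Φ H) = H)
    (hbase : basePairs T Φ ⊆ H) :
    ∃ n : ℕ, EnSet T Φ n ⊆ H := by
  obtain ⟨U, hU, rfl⟩ := hopen
  obtain ⟨n, hn⟩ := clopen_subgroupoid_contains_En_general hΦ hU
    (hbase.trans Set.inter_subset_left)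
  exact ⟨n, fun p hp => ⟨hn hp, hp.1⟩⟩
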